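/- Let γ > 1, R > 0, T∞ > 0, m > 0 and u∞ < 0 with m u∞² = γRT∞ + 1 (the degenerate Bohm criterion). Then for all real numbers φ, ψ₁, ζ, σ the following identity holds: (RT∞|u∞|/2)φ² − RT∞ φψ₁ + (m|u∞|/2)ψ₁² − Rψ₁ζ + (R|u∞|/(2(γ−1)T∞))ζ² + σψ₁ + (|u∞|/2)σ² = (RT∞|u∞|/2)(φ − ψ₁/|u∞|)² + ((γ−1)RT∞/(2|u∞|))(ψ₁ − |u∞|ζ/((γ−1)T∞))² + (|u∞|/2)(σ + ψ₁/|u∞|)². In particular the left-hand side is nonnegative. -/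

import Mathlib

/-!
Each of the three squares comes from completing the square,
`a / (2 * b) * (x - b * y / a) ^ 2 = a / (2 * b) * x ^ 2 - x * y + b / (2 * a) * y ^ 2`:
with `v = |u∞|`, take `(a, b, x, y)` to be `(v, 1, φ, ψ)`, `((γ - 1) * T, v, ψ, ζ)` and
`(v, 1, σ, -ψ)`, weighted by `R * T`, `R` and `1`. All terms other than the multiples of `ψ ^ 2`
agree, and the degenerate Bohm relation says precisely that those add up to `m * v / 2`.
-/

section Field

variable {K : Type*} [Field K]

/-- The quadratic form in the integrand of the weighted energy term `I₉`, with `T` standing for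
`T∞`, `ψ` for `ψ₁`, and `v` for the speed `|u∞| = -u∞`. -/
def bohmEnergyForm (γ R T m v φ ψ ζ σ : K) : K :=
  (R * T * v / 2) * φ ^ 2 - R * T * φ * ψ
    + (m * v / 2) * ψ ^ 2 - R * ψ * ζ
    + (R * v / (2 * (γ - 1) * T)) * ζ ^ 2
    + σ * ψ + (v / 2) * σ ^ 2

variable [NeZero (2 : K)]

theorem div_two_mul_mul_sub_sq {a b : K} (ha : a ≠ 0) (hb : b ≠ 0) (x y : K) :
    a / (2 * b) * (x - b * y / a) ^ 2 =
      a / (2 * b) * x ^ 2 - x * y + b / (2 * a) * y ^ 2 := by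
  have h2 : (2 : K) ≠ 0 := two_ne_zero
  field_simp
  ring

theorem half_mul_eq_of_degenerate_bohm {γ R T m v : K} (hv : v ≠ 0)
    (hdeg : m * v ^ 2 = γ * R * T + 1) :
    m * v / 2 = R * T / (2 * v) + (γ - 1) * R * T / (2 * v) + 1 / (2 * v) := by
  have h2 : (2 : K) ≠ 0 := two_ne_zero
  field_simp
  linear_combination hdeg

theorem bohmEnergyForm_eq_sum_sq {γ R T m v : K} (hγ : γ ≠ 1) (hT : T ≠ 0) (hv : v ≠ 0)
    (hdeg : m * v ^ 2 = γ * R * T + 1) (φ ψ ζ σ : K) :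
    bohmEnergyForm γ R T m v φ ψ ζ σ =
      (R * T * v / 2) * (φ - ψ / v) ^ 2
        + ((γ - 1) * R * T / (2 * v)) * (ψ - v * ζ / ((γ - 1) * T)) ^ 2
        + (v / 2) * (σ + ψ / v) ^ 2 := by
  have hφψ := div_two_mul_mul_sub_sq hv one_ne_zero φ ψ
  have hψζ := div_two_mul_mul_sub_sq (mul_ne_zero (sub_ne_zero.2 hγ) hT) hv ψ ζ
  have hσψ := div_two_mul_mul_sub_sq hv one_ne_zero σ (-ψ)
  have hψψ := half_mul_eq_of_degenerate_bohm hv hdeg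
  unfold bohmEnergyForm
  -- `ring` inverts products of atoms only, so `γ - 1` must become an atom.
  generalize γ - 1 = g at hψζ hψψ ⊢
  linear_combination ψ ^ 2 * hψψ - R * T * hφψ - R * hψζ - hσψ

end Field

section OrderedField

variable {K : Type*} [Field K] [LinearOrder K] [IsStrictOrderedRing K]

theorem bohmEnergyForm_nonneg {γ R T m v : K} (hγ : 1 < γ) (hR : 0 ≤ R) (hT : 0 < T)
    (hv : 0 < v) (hdeg : m * v ^ 2 = γ * R * T + 1) (φ ψ ζ σ : K) :
    0 ≤ bohmEnergyForm γ R T m v φ ψ ζ σ := by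
  have : 0 < γ - 1 := sub_pos.2 hγ
  rw [bohmEnergyForm_eq_sum_sq hγ.ne' hT.ne' hv.ne' hdeg]
  positivity

theorem degenerate_quadratic_identity_general {γ R T m v : K} (hγ : 1 < γ) (hR : 0 ≤ R)
    (hT : 0 < T) (hv : 0 < v) (hdeg : m * v ^ 2 = γ * R * T + 1) (φ ψ ζ σ : K) :
    bohmEnergyForm γ R T m v φ ψ ζ σ =
        (R * T * v / 2) * (φ - ψ / v) ^ 2
          + ((γ - 1) * R * T / (2 * v)) * (ψ - v * ζ / ((γ - 1) * T)) ^ 2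
          + (v / 2) * (σ + ψ / v) ^ 2 ∧
      0 ≤ bohmEnergyForm γ R T m v φ ψ ζ σ :=
  ⟨bohmEnergyForm_eq_sum_sq hγ.ne' hT.ne' hv.ne' hdeg φ ψ ζ σ,
    bohmEnergyForm_nonneg hγ hR hT hv hdeg φ ψ ζ σ⟩

end OrderedField

/-- Under the degenerate Bohm relation `m u∞² = γRT∞ + 1` (with `|u∞| = −u∞` since
`u∞ < 0`), the quadratic form arising in the weighted energy estimate of the term `I₉`
is a sum of three squares; in particular it is nonnegative. -/
theorem degenerate_quadratic_identity
    (γ R Tinf m uinf : ℝ) (hγ : 1 < γ) (hR : 0 < R) (hT : 0 < Tinf) (hm : 0 < m)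
    (hu : uinf < 0) (hdeg : m * uinf ^ 2 = γ * R * Tinf + 1) :
    ∀ φ ψ₁ ζ σ : ℝ,
      ((R * Tinf * (-uinf) / 2) * φ ^ 2 - R * Tinf * φ * ψ₁
          + (m * (-uinf) / 2) * ψ₁ ^ 2 - R * ψ₁ * ζ
          + (R * (-uinf) / (2 * (γ - 1) * Tinf)) * ζ ^ 2
          + σ * ψ₁ + ((-uinf) / 2) * σ ^ 2
        = (R * Tinf * (-uinf) / 2) * (φ - ψ₁ / (-uinf)) ^ 2
          + ((γ - 1) * R * Tinf / (2 * (-uinf))) *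
              (ψ₁ - (-uinf) * ζ / ((γ - 1) * Tinf)) ^ 2
          + ((-uinf) / 2) * (σ + ψ₁ / (-uinf)) ^ 2) ∧
      0 ≤ (R * Tinf * (-uinf) / 2) * φ ^ 2 - R * Tinf * φ * ψ₁
          + (m * (-uinf) / 2) * ψ₁ ^ 2 - R * ψ₁ * ζ
          + (R * (-uinf) / (2 * (γ - 1) * Tinf)) * ζ ^ 2
          + σ * ψ₁ + ((-uinf) / 2) * σ ^ 2 :=
  degenerate_quadratic_identity_general hγ hR.le hT (neg_pos.2 hu) (by rwa [neg_sq])
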